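/- Let X ~ N_n(μ, Σ) be multivariate normal with mean μ and positive definite covariance Σ = (σ_{ij}), let p₁ ≥ 2 be an integer, and let f : ℝⁿ → ℝ be twice continuously differentiable such that the function x ↦ x₁^{p₁−2} f(x) satisfies the regularity and limit conditions of the normal case of Theorem 1 and all expectations below are finite. Then E[X₁^{p₁} f(X)] = Σ_{i=1}^n Σ_{j=1}^n σ_{1i} σ_{1j} E[∇_{i,j}(X₁^{p₁−2} f(X))] + 2μ₁ Σ_{i=1}^n σ_{1i} E[∇_i(X₁^{p₁−2} f(X))] + σ₁₁ E[X₁^{p₁−2} f(X)] + μ₁² E[X₁^{p₁−2} f(X)], where ∇_i and ∇_{i,j} are applied to the function x ↦ x₁^{p₁−2} f(x). -/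

import Mathlib

open MeasureTheory Real Set Filter Matrix

/-- The density of the multivariate normal `N_n(μ, Σ)` with positive definite `Σ`. -/
noncomputable def normalPdf (n : ℕ) (μ : Fin n → ℝ) (S : Matrix (Fin n) (Fin n) ℝ)
    (x : Fin n → ℝ) : ℝ :=
  (2 * π) ^ (-(n : ℝ) / 2) * (Real.sqrt S.det)⁻¹ *
    Real.exp (-(1 / 2) * ((x - μ) ⬝ᵥ S⁻¹.mulVec (x - μ)))

/-- First partial derivative `∇_i f`. -/
noncomputable def pd (n : ℕ) (f : (Fin n → ℝ) → ℝ) (i : Fin n) (x : Fin n → ℝ) : ℝ :=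
  fderiv ℝ f x (Pi.single i 1)

/-- Second partial derivative `∇_{i,j} f`. -/
noncomputable def pd2 (n : ℕ) (f : (Fin n → ℝ) → ℝ) (i j : Fin n) (x : Fin n → ℝ) : ℝ :=
  fderiv ℝ (fun y => pd n f j y) x (Pi.single i 1)

/-!
Put `v = S *ᵥ a`. Along `v` the normal density `φ` satisfies `∂ᵥφ = -(a ⬝ᵥ (x - μ)) φ`, hence
`∂ᵥ∂ᵥφ = ((a ⬝ᵥ (x - μ))² - a ⬝ᵥ v) φ`. The derivative along `v` of `h ∂ᵥφ - ∂ᵥh φ` is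
`h ∂ᵥ∂ᵥφ - ∂ᵥ∂ᵥh φ`: the products `∂ᵥh ∂ᵥφ`, which need not be integrable, cancel. An integrable
directional derivative of an integrable function integrates to zero, so this gives the second
centred moment against `h`; in the same way `∂ᵥ(h φ)` gives the first one, and expanding the square
removes the centring.
-/

section LineDeriv

theorem hasLineDerivAt_mul {𝕜 E 𝔸 : Type*} [NontriviallyNormedField 𝕜] [AddCommGroup E]
    [Module 𝕜 E] [NormedRing 𝔸] [NormedAlgebra 𝕜 𝔸] {u w : E → 𝔸} {u' w' : 𝔸} {x v : E}
    (hu : HasLineDerivAt 𝕜 u u' x v) (hw : HasLineDerivAt 𝕜 w w' x v) :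
    HasLineDerivAt 𝕜 (fun y => u y * w y) (u' * w x + u x * w') x v := by
  simpa [HasLineDerivAt] using! HasDerivAt.mul hu hw

theorem hasLineDerivAt_dotProduct_sub {𝕜 ι : Type*} [NontriviallyNormedField 𝕜] [Fintype ι]
    (a b x v : ι → 𝕜) :
    HasLineDerivAt 𝕜 (fun y => a ⬝ᵥ (y - b)) (a ⬝ᵥ v) x v := by
  have haffine : (fun t : 𝕜 => a ⬝ᵥ (x + t • v - b)) =
      fun t => t * (a ⬝ᵥ v) + a ⬝ᵥ (x - b) := by
    funext t
    rw [add_sub_right_comm, dotProduct_add, dotProduct_smul, smul_eq_mul, add_comm]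
  rw [HasLineDerivAt, haffine]
  exact (hasDerivAt_mul_const _).add_const _

variable {E : Type*} [NormedAddCommGroup E] [NormedSpace ℝ E] [FiniteDimensional ℝ E]
  [MeasurableSpace E] [BorelSpace E] {ν : Measure E} [ν.IsAddHaarMeasure]

theorem integral_eq_zero_of_hasLineDerivAt {F : Type*} [NormedAddCommGroup F] [NormedSpace ℝ F]
    {u u' : E → F} {v : E} (hu : Integrable u ν) (hu' : Integrable u' ν)
    (hderiv : ∀ x, HasLineDerivAt ℝ u (u' x) x v) : ∫ x, u' x ∂ν = 0 := by
  have hconst : ∀ x, HasLineDerivAt ℝ (fun _ : E => (1 : ℝ)) 0 x v := fun _ => hasDerivAt_const _ _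
  simpa using integral_bilinear_hasLineDerivAt_right_eq_neg_left_of_integrable
    (f := fun _ => (1 : ℝ)) (f' := fun _ => 0) (B := ContinuousLinearMap.lsmul ℝ ℝ)
    (by simp) (by simpa using hu') (by simpa using hu) (fun x _ => hconst x) fun x _ => hderiv x

theorem integral_mul_lineDeriv_lineDeriv_eq {𝔸 : Type*} [NormedRing 𝔸] [NormedAlgebra ℝ 𝔸]
    {u u' u'' w w' w'' : E → 𝔸} {v : E}
    (hu : ∀ x, HasLineDerivAt ℝ u (u' x) x v) (hu' : ∀ x, HasLineDerivAt ℝ u' (u'' x) x v)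
    (hw : ∀ x, HasLineDerivAt ℝ w (w' x) x v) (hw' : ∀ x, HasLineDerivAt ℝ w' (w'' x) x v)
    (huw' : Integrable (fun x => u x * w' x) ν) (hu'w : Integrable (fun x => u' x * w x) ν)
    (huw'' : Integrable (fun x => u x * w'' x) ν) (hu''w : Integrable (fun x => u'' x * w x) ν) :
    ∫ x, u x * w'' x ∂ν = ∫ x, u'' x * w x ∂ν := by
  have hderiv : ∀ x, HasLineDerivAt ℝ (fun y => u y * w' y - u' y * w y)
      (u x * w'' x - u'' x * w x) x v := fun x => by
    have hsub := HasDerivAt.sub (hasLineDerivAt_mul (hu x) (hw' x))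
      (hasLineDerivAt_mul (hu' x) (hw x))
    exact hsub.congr_deriv (by abel)
  rw [← sub_eq_zero, ← integral_sub huw'' hu''w]
  exact integral_eq_zero_of_hasLineDerivAt (huw'.sub hu'w) (huw''.sub hu''w) hderiv

end LineDeriv

theorem integrable_pow_mul_of_le {Ω 𝔸 : Type*} [MeasurableSpace Ω] {ν : Measure Ω}
    [NormedDivisionRing 𝔸] {g u : Ω → 𝔸} {p q : ℕ} (hpq : p ≤ q) (hg : AEStronglyMeasurable g ν)
    (hu : Integrable u ν) (hgu : Integrable (fun x => g x ^ q * u x) ν) :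
    Integrable (fun x => g x ^ p * u x) ν := by
  refine (hu.norm.add hgu.norm).mono' ((hg.pow p).mul hu.1) (Eventually.of_forall fun x => ?_)
  have hpow : ‖g x‖ ^ p ≤ 1 + ‖g x‖ ^ q := by
    rcases le_total ‖g x‖ 1 with hle | hge
    · exact (pow_le_one₀ (norm_nonneg _) hle).trans (le_add_of_nonneg_right (by positivity))
    · exact (pow_le_pow_right₀ hge hpq).trans (le_add_of_nonneg_left zero_le_one)
  calc ‖g x ^ p * u x‖ = ‖g x‖ ^ p * ‖u x‖ := by rw [norm_mul, norm_pow]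
    _ ≤ (1 + ‖g x‖ ^ q) * ‖u x‖ := by gcongr
    _ = ‖u x‖ + ‖g x ^ q * u x‖ := by rw [norm_mul, norm_pow]; ring

theorem dotProduct_inv_mulVec_add_smul_mulVec {ι R : Type*} [Fintype ι] [DecidableEq ι]
    [CommRing R] {S : Matrix ι ι R} (hsymm : S.IsSymm) (hdet : IsUnit S.det) (a y : ι → R) (t : R) :
    (y + t • S *ᵥ a) ⬝ᵥ S⁻¹ *ᵥ (y + t • S *ᵥ a) =
      y ⬝ᵥ S⁻¹ *ᵥ y + 2 * t * (a ⬝ᵥ y) + t ^ 2 * (a ⬝ᵥ S *ᵥ a) := by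
  have hcancel : S⁻¹ *ᵥ S *ᵥ a = a := by
    rw [mulVec_mulVec, nonsing_inv_mul _ hdet, one_mulVec]
  have hadjoint : S *ᵥ a ⬝ᵥ S⁻¹ *ᵥ y = a ⬝ᵥ y := by
    rw [dotProduct_mulVec, ← mulVec_transpose, hsymm.inv.eq, hcancel]
  simp only [mulVec_add, mulVec_smul, add_dotProduct, dotProduct_add, smul_dotProduct,
    dotProduct_smul, smul_eq_mul, hcancel, hadjoint, dotProduct_comm y a,
    dotProduct_comm (S *ᵥ a) a]
  ring

section Normal

variable {n : ℕ} {μ : Fin n → ℝ} {S : Matrix (Fin n) (Fin n) ℝ}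

theorem hasLineDerivAt_normalPdf (hS : S.PosDef) (a x : Fin n → ℝ) :
    HasLineDerivAt ℝ (normalPdf n μ S) (-(a ⬝ᵥ (x - μ)) * normalPdf n μ S x) x (S *ᵥ a) := by
  have hsymm : S.IsSymm := isHermitian_iff_isSymm.1 hS.isHermitian
  have hquad (t : ℝ) := dotProduct_inv_mulVec_add_smul_mulVec hsymm hS.det_pos.ne'.isUnit a
    (x - μ) t
  have hexponent : HasDerivAt (fun t : ℝ => -(1 / 2) *
      ((x + t • S *ᵥ a - μ) ⬝ᵥ S⁻¹ *ᵥ (x + t • S *ᵥ a - μ))) (-(a ⬝ᵥ (x - μ))) 0 := by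
    simp only [add_sub_right_comm, hquad]
    have hlin : HasDerivAt (fun t : ℝ => 2 * t * (a ⬝ᵥ (x - μ))) (2 * 1 * (a ⬝ᵥ (x - μ))) 0 :=
      ((hasDerivAt_id 0).const_mul 2).mul_const _
    have hsq := (hasDerivAt_pow 2 (0 : ℝ)).mul_const (a ⬝ᵥ S *ᵥ a)
    exact (((hlin.const_add _).add hsq).const_mul _).congr_deriv (by simp)
  refine (hexponent.exp.const_mul _).congr_deriv ?_
  simp only [normalPdf, zero_smul, add_zero]
  ring

theorem hasLineDerivAt_neg_dotProduct_sub_mul_normalPdf (hS : S.PosDef) (a x : Fin n → ℝ) :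
    HasLineDerivAt ℝ (fun y => -(a ⬝ᵥ (y - μ)) * normalPdf n μ S y)
      (((a ⬝ᵥ (x - μ)) ^ 2 - a ⬝ᵥ S *ᵥ a) * normalPdf n μ S x) x (S *ᵥ a) := by
  have hneg : HasLineDerivAt ℝ (fun y => -(a ⬝ᵥ (y - μ))) (-(a ⬝ᵥ S *ᵥ a)) x (S *ᵥ a) :=
    HasDerivAt.neg (hasLineDerivAt_dotProduct_sub a μ x (S *ᵥ a))
  exact HasDerivAt.congr_deriv (hasLineDerivAt_mul hneg (hasLineDerivAt_normalPdf hS a x)) (by ring)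

variable {a : Fin n → ℝ} {h h' h'' : (Fin n → ℝ) → ℝ}

/-- **Stein's lemma** in the direction `S *ᵥ a`. -/
theorem integral_dotProduct_sub_mul_normalPdf (hS : S.PosDef)
    (hh : ∀ x, HasLineDerivAt ℝ h (h' x) x (S *ᵥ a))
    (hint : Integrable fun x => h x * normalPdf n μ S x)
    (hint' : Integrable fun x => h' x * normalPdf n μ S x)
    (hmoment : Integrable fun x => (a ⬝ᵥ (x - μ)) * (h x * normalPdf n μ S x)) :
    ∫ x, (a ⬝ᵥ (x - μ)) * (h x * normalPdf n μ S x) = ∫ x, h' x * normalPdf n μ S x := by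
  have hparts : ∫ x, (h' x * normalPdf n μ S x -
      (a ⬝ᵥ (x - μ)) * (h x * normalPdf n μ S x)) = 0 :=
    integral_eq_zero_of_hasLineDerivAt hint (hint'.sub hmoment) fun x =>
      HasDerivAt.congr_deriv (hasLineDerivAt_mul (hh x) (hasLineDerivAt_normalPdf hS a x)) (by ring)
  rw [integral_sub hint' hmoment] at hparts
  exact (sub_eq_zero.1 hparts).symm

theorem integral_sq_dotProduct_sub_mul_normalPdf (hS : S.PosDef)
    (hh : ∀ x, HasLineDerivAt ℝ h (h' x) x (S *ᵥ a))
    (hh' : ∀ x, HasLineDerivAt ℝ h' (h'' x) x (S *ᵥ a))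
    (hint : Integrable fun x => h x * normalPdf n μ S x)
    (hint' : Integrable fun x => h' x * normalPdf n μ S x)
    (hint'' : Integrable fun x => h'' x * normalPdf n μ S x)
    (hmoment : Integrable fun x => (a ⬝ᵥ (x - μ)) * (h x * normalPdf n μ S x))
    (hmoment₂ : Integrable fun x => (a ⬝ᵥ (x - μ)) ^ 2 * (h x * normalPdf n μ S x)) :
    ∫ x, (a ⬝ᵥ (x - μ)) ^ 2 * (h x * normalPdf n μ S x) =
      (∫ x, h'' x * normalPdf n μ S x) + (a ⬝ᵥ S *ᵥ a) * ∫ x, h x * normalPdf n μ S x := by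
  have hsplit (x : Fin n → ℝ) : h x * (((a ⬝ᵥ (x - μ)) ^ 2 - a ⬝ᵥ S *ᵥ a) * normalPdf n μ S x) =
      (a ⬝ᵥ (x - μ)) ^ 2 * (h x * normalPdf n μ S x) -
        (a ⬝ᵥ S *ᵥ a) * (h x * normalPdf n μ S x) := by ring
  have hgreen := integral_mul_lineDeriv_lineDeriv_eq hh hh'
    (hasLineDerivAt_normalPdf hS a) (hasLineDerivAt_neg_dotProduct_sub_mul_normalPdf hS a)
    (hmoment.neg.congr (Eventually.of_forall fun x => by simp only [Pi.neg_apply]; ring)) hint'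
    (by simp only [hsplit]; exact hmoment₂.sub (hint.const_mul _)) hint''
  simp only [hsplit] at hgreen
  rwa [integral_sub hmoment₂ (hint.const_mul _), integral_const_mul, sub_eq_iff_eq_add] at hgreen

theorem integral_sq_dotProduct_mul_normalPdf (hS : S.PosDef)
    (hh : ∀ x, HasLineDerivAt ℝ h (h' x) x (S *ᵥ a))
    (hh' : ∀ x, HasLineDerivAt ℝ h' (h'' x) x (S *ᵥ a))
    (hint : Integrable fun x => h x * normalPdf n μ S x)
    (hint' : Integrable fun x => h' x * normalPdf n μ S x)
    (hint'' : Integrable fun x => h'' x * normalPdf n μ S x)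
    (hmoment : Integrable fun x => (a ⬝ᵥ x) ^ 2 * (h x * normalPdf n μ S x)) :
    ∫ x, (a ⬝ᵥ x) ^ 2 * (h x * normalPdf n μ S x) =
      (∫ x, h'' x * normalPdf n μ S x) + 2 * (a ⬝ᵥ μ) * (∫ x, h' x * normalPdf n μ S x)
        + (a ⬝ᵥ S *ᵥ a + (a ⬝ᵥ μ) ^ 2) * ∫ x, h x * normalPdf n μ S x := by
  have hmoment₁ : Integrable fun x => (a ⬝ᵥ x) * (h x * normalPdf n μ S x) := by
    have hmeas : AEStronglyMeasurable fun x : Fin n → ℝ => a ⬝ᵥ x :=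
      Continuous.aestronglyMeasurable (by fun_prop)
    simpa only [pow_one] using integrable_pow_mul_of_le one_le_two hmeas hint hmoment
  have hcentred₁ : Integrable fun x => (a ⬝ᵥ (x - μ)) * (h x * normalPdf n μ S x) := by
    simp only [dotProduct_sub, sub_mul]
    exact hmoment₁.sub (hint.const_mul _)
  have hexpand (x : Fin n → ℝ) : (a ⬝ᵥ x) ^ 2 * (h x * normalPdf n μ S x) =
      (a ⬝ᵥ (x - μ)) ^ 2 * (h x * normalPdf n μ S x)
        + 2 * (a ⬝ᵥ μ) * ((a ⬝ᵥ (x - μ)) * (h x * normalPdf n μ S x))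
        + (a ⬝ᵥ μ) ^ 2 * (h x * normalPdf n μ S x) := by
    rw [dotProduct_sub]; ring
  have hcentred₂ : Integrable fun x => (a ⬝ᵥ (x - μ)) ^ 2 * (h x * normalPdf n μ S x) := by
    refine ((hmoment.sub (hcentred₁.const_mul (2 * (a ⬝ᵥ μ)))).sub
      (hint.const_mul ((a ⬝ᵥ μ) ^ 2))).congr (Eventually.of_forall fun x => ?_)
    simp only [Pi.sub_apply, hexpand]
    ring
  simp only [hexpand]
  rw [integral_add (by exact hcentred₂.add (hcentred₁.const_mul _)) (hint.const_mul _),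
    integral_add hcentred₂ (hcentred₁.const_mul _), integral_const_mul, integral_const_mul,
    integral_sq_dotProduct_sub_mul_normalPdf hS hh hh' hint hint' hint'' hcentred₁ hcentred₂,
    integral_dotProduct_sub_mul_normalPdf hS hh hint hint' hcentred₁]
  ring

end Normal

section PartialDerivatives

variable {n : ℕ} {h : (Fin n → ℝ) → ℝ}

theorem hasLineDerivAt_sum_mul_pd {x : Fin n → ℝ} (hh : DifferentiableAt ℝ h x)
    (v : Fin n → ℝ) : HasLineDerivAt ℝ h (∑ i, v i * pd n h i x) x v := by
  have hcoord : fderiv ℝ h x v = ∑ i, v i * pd n h i x := by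
    conv_lhs => rw [pi_eq_sum_univ' v]
    simp only [map_sum, map_smul, smul_eq_mul, pd]
  exact hcoord ▸ hh.hasFDerivAt.hasLineDerivAt v

theorem hasLineDerivAt_sum_sum_mul_pd2 {x : Fin n → ℝ}
    (hh : ∀ i, DifferentiableAt ℝ (pd n h i) x) (v : Fin n → ℝ) :
    HasLineDerivAt ℝ (fun y => ∑ i, v i * pd n h i y)
      (∑ i, ∑ j, v i * v j * pd2 n h i j x) x v := by
  have hterm (j : Fin n) : HasLineDerivAt ℝ (pd n h j) (∑ i, v i * pd2 n h i j x) x v :=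
    hasLineDerivAt_sum_mul_pd (hh j) v
  refine (HasDerivAt.fun_sum fun j _ => HasDerivAt.const_mul (v j) (hterm j)).congr_deriv ?_
  rw [Finset.sum_comm]
  simp only [Finset.mul_sum]
  exact Finset.sum_congr rfl fun i _ => Finset.sum_congr rfl fun j _ => by ring

theorem differentiable_pd_of_contDiff_two (hh : ContDiff ℝ 2 h) (i : Fin n) :
    Differentiable ℝ (pd n h i) :=
  ((hh.fderiv_right (m := 1) le_rfl).clm_apply contDiff_const).differentiable one_ne_zero

end PartialDerivatives

theorem stmt_8_general {n : ℕ} {μ : Fin n → ℝ} {S : Matrix (Fin n) (Fin n) ℝ} (hS : S.PosDef)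
    (a : Fin n → ℝ) {h : (Fin n → ℝ) → ℝ} (hh : Differentiable ℝ h)
    (hpd : ∀ i, Differentiable ℝ (pd n h i))
    (hint : Integrable fun x => h x * normalPdf n μ S x)
    (hint_pd : ∀ i, Integrable fun x => pd n h i x * normalPdf n μ S x)
    (hint_pd2 : ∀ i j, Integrable fun x => pd2 n h i j x * normalPdf n μ S x)
    (hmoment : Integrable fun x => (a ⬝ᵥ x) ^ 2 * (h x * normalPdf n μ S x)) :
    ∫ x, (a ⬝ᵥ x) ^ 2 * (h x * normalPdf n μ S x) =
      (∑ i, ∑ j, (S *ᵥ a) i * (S *ᵥ a) j * ∫ x, pd2 n h i j x * normalPdf n μ S x)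
      + 2 * (a ⬝ᵥ μ) * (∑ i, (S *ᵥ a) i * ∫ x, pd n h i x * normalPdf n μ S x)
      + (a ⬝ᵥ S *ᵥ a) * (∫ x, h x * normalPdf n μ S x)
      + (a ⬝ᵥ μ) ^ 2 * ∫ x, h x * normalPdf n μ S x := by
  set v := S *ᵥ a
  have hsmul (i : Fin n) := (hint_pd i).const_mul (v i)
  have hsmul₂ (i j : Fin n) := (hint_pd2 i j).const_mul (v i * v j)
  have hint₁ : Integrable fun x => (∑ i, v i * pd n h i x) * normalPdf n μ S x := by
    simp only [Finset.sum_mul, mul_assoc]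
    exact integrable_finsetSum _ fun i _ => hsmul i
  have hint₂ : Integrable fun x =>
      (∑ i, ∑ j, v i * v j * pd2 n h i j x) * normalPdf n μ S x := by
    simp only [Finset.sum_mul, mul_assoc (_ * _) (pd2 ..)]
    exact integrable_finsetSum _ fun i _ => integrable_finsetSum _ fun j _ => hsmul₂ i j
  rw [integral_sq_dotProduct_mul_normalPdf hS (fun x => hasLineDerivAt_sum_mul_pd (hh x) v)
    (fun x => hasLineDerivAt_sum_sum_mul_pd2 (fun i => hpd i x) v) hint hint₁ hint₂ hmoment]
  simp only [Finset.sum_mul, mul_assoc (v _) (pd ..), mul_assoc (_ * _) (pd2 ..)]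
  rw [integral_finsetSum _ fun i _ => hsmul i,
    integral_finsetSum _ fun i _ => integrable_finsetSum _ fun j _ => hsmul₂ i j]
  simp only [integral_finsetSum _ fun j _ => hsmul₂ _ j, integral_const_mul]
  ring

/-- Let `X ~ N_n(μ, Σ)` with positive definite `Σ`, let `p₁ ≥ 2`, and let `f` be twice
continuously differentiable such that `x ↦ x₁^(p₁-2) f(x)` satisfies the regularity and limit
conditions of the normal case of Theorem 1 and all expectations below are finite. Then
`E[X₁^(p₁) f(X)] = Σᵢⱼ σ_{1i}σ_{1j} E[∇_{i,j}(X₁^(p₁-2)f(X))]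
  + 2μ₁ Σᵢ σ_{1i} E[∇_i(X₁^(p₁-2)f(X))] + σ₁₁ E[X₁^(p₁-2)f(X)] + μ₁² E[X₁^(p₁-2)f(X)]`. -/
theorem stmt_8 (n : ℕ) (hn : 0 < n) (i1 : Fin n) (hi1 : i1 = ⟨0, hn⟩)
    (μ : Fin n → ℝ) (S : Matrix (Fin n) (Fin n) ℝ) (hS : S.PosDef)
    (A : Matrix (Fin n) (Fin n) ℝ) (hA_low : ∀ i j : Fin n, i < j → A i j = 0)
    (hA : A * Aᵀ = S)
    (p1 : ℕ) (hp1 : 2 ≤ p1)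
    (f : (Fin n → ℝ) → ℝ) (hf : ContDiff ℝ 2 f)
    (h : (Fin n → ℝ) → ℝ) (hh : h = fun x => (x i1) ^ (p1 - 2) * f x)
    (hint0 : Integrable (fun x : Fin n → ℝ => (x i1) ^ p1 * f x * normalPdf n μ S x))
    (hint1 : ∀ i j : Fin n,
      Integrable (fun x : Fin n → ℝ => pd2 n h i j x * normalPdf n μ S x))
    (hint2 : ∀ i : Fin n, Integrable (fun x : Fin n → ℝ => pd n h i x * normalPdf n μ S x))
    (hint3 : Integrable (fun x : Fin n → ℝ => h x * normalPdf n μ S x))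
    (hlim1 : ∀ x : Fin n → ℝ, Tendsto
      (fun t : ℝ => t * h (A.mulVec (Function.update x i1 t) + μ) *
        Real.exp (-(Function.update x i1 t ⬝ᵥ Function.update x i1 t) / 2))
      (cocompact ℝ) (nhds 0))
    (hlim2 : ∀ x : Fin n → ℝ, Tendsto
      (fun t : ℝ => pd n h i1 (A.mulVec (Function.update x i1 t) + μ) *
        Real.exp (-(Function.update x i1 t ⬝ᵥ Function.update x i1 t) / 2))
      (cocompact ℝ) (nhds 0)) :
    ∫ x : Fin n → ℝ, (x i1) ^ p1 * f x * normalPdf n μ S x =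
      (∑ i : Fin n, ∑ j : Fin n,
        S i1 i * S i1 j * ∫ x : Fin n → ℝ, pd2 n h i j x * normalPdf n μ S x)
      + 2 * μ i1 * (∑ i : Fin n, S i1 i * ∫ x : Fin n → ℝ, pd n h i x * normalPdf n μ S x)
      + S i1 i1 * (∫ x : Fin n → ℝ, h x * normalPdf n μ S x)
      + (μ i1) ^ 2 * ∫ x : Fin n → ℝ, h x * normalPdf n μ S x := by
  have hpow (x : Fin n → ℝ) : x i1 ^ p1 * f x = x i1 ^ 2 * h x := by
    rw [hh, ← mul_assoc, ← pow_add, Nat.add_sub_cancel' hp1]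
  have hrow : S *ᵥ Pi.single i1 1 = S i1 := by
    rw [mulVec_single_one]; exact congrFun hS.isHermitian.eq i1
  have hC2 : ContDiff ℝ 2 h := by rw [hh]; fun_prop
  simpa [hpow, hrow, mul_assoc] using stmt_8_general hS (Pi.single i1 1) (μ := μ)
    (hC2.differentiable two_ne_zero) (differentiable_pd_of_contDiff_two hC2) hint3 hint2 hint1
    (by simpa [hpow, mul_assoc] using hint0)
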